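/- For all t, t' > 0, lim_{x → ∞} [ ∫₀^∞ Ψ_t(y,x) Ψ_{t'}(y,x) dy − ∫₀^x Ψ_t(y,x) dy − ∫₀^x Ψ_{t'}(y,x) dy + x + ∫₀^{min(t,t')} ∫₀^∞ q^N_{t−s}(y,x) q^N_{t'−s}(y,x) dy ds ] = (2π)^{-1/2} ( t^{1/2} + (t')^{1/2} − |t − t'|^{1/2} ). -/

import Mathlib

/-!
Write `G = 1 − Φ` for the normal tail, `φ` for the normal density, `a = √t`, `b = √t'`.

*Initial-data part.* The first four terms combine to
`∫₀^∞ (Ψ_t(y,x) − 𝟙_{y<x}) (Ψ_{t'}(y,x) − 𝟙_{y<x}) dy` (`initial_eq`). In the variable `u = y − x`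
the first factor is `G(u/a) − 𝟙_{u<0} + G((u+2x)/a)`, which is at most `4 exp(-|u|/a)` in absolute
value on `u > −x`; dominated convergence removes the reflected tail and leaves
`∫_ℝ G(|u|/a) G(|u|/b) du = 2 ∫₀^∞ G(u/a) G(u/b) du`. An explicit antiderivative
(`integral_normTail_mul`) evaluates this as `(2π)^{-1/2} (√t + √t' − √(t+t'))`.

*Noise part.* By evenness of the Neumann kernel and the Chapman–Kolmogorov identity, the inner
integral is `q_{t+t'-2s}(0) + q_{t+t'-2s}(2x)` (`integral_neumannKer_mul`). The second term vanishes
as `x → ∞`, being dominated by the first, whose time integral is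
`(2π)^{-1/2} (√(t+t') − √|t−t'|)` since `t + t' − 2 min(t,t') = |t−t'|`.

The two limits add up to the claim, the terms `√(t+t')` cancelling.
-/

open MeasureTheory

/-- The standard normal cumulative distribution function. -/
noncomputable def Phi (x : ℝ) : ℝ :=
  (Real.sqrt (2 * Real.pi))⁻¹ * ∫ y in Set.Iic x, Real.exp (-y ^ 2 / 2)

/-- The kernel `Ψ_t(y,x) = 2 − Φ((y−x)/√t) − Φ((y+x)/√t)`. -/
noncomputable def Psi (t y x : ℝ) : ℝ :=
  2 - Phi ((y - x) / Real.sqrt t) - Phi ((y + x) / Real.sqrt t)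

/-- The one-dimensional heat kernel `q_t(z) = (2πt)^{-1/2} e^{-z²/(2t)}`. -/
noncomputable def heatKer (t z : ℝ) : ℝ :=
  (Real.sqrt (2 * Real.pi * t))⁻¹ * Real.exp (-z ^ 2 / (2 * t))

/-- The Neumann heat kernel on the half-line, `q^N_t(y,x) = q_t(y−x) + q_t(y+x)`. -/
noncomputable def neumannKer (t y x : ℝ) : ℝ :=
  heatKer t (y - x) + heatKer t (y + x)

open Filter Topology Set

/-! ### The normal tail -/

/-- The standard normal density. -/
noncomputable def normDens (u : ℝ) : ℝ := (Real.sqrt (2 * Real.pi))⁻¹ * Real.exp (-u ^ 2 / 2)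

/-- The standard normal upper tail `1 − Φ`. -/
noncomputable def normTail (u : ℝ) : ℝ := 1 - Phi u

lemma integrable_exp_neg_sq_half : Integrable (fun y : ℝ => Real.exp (-y ^ 2 / 2)) := by
  have h := integrable_exp_neg_mul_sq (b := 1 / 2) (by norm_num)
  refine h.congr (Eventually.of_forall fun y => ?_)
  change Real.exp _ = Real.exp _
  congr 1; ring

lemma integral_exp_neg_sq_half :
    ∫ y : ℝ, Real.exp (-y ^ 2 / 2) = Real.sqrt (2 * Real.pi) := by
  have h := integral_gaussian (1 / 2)
  rw [show Real.pi / (1 / 2) = 2 * Real.pi by ring] at h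
  rw [← h]
  congr 1; ext y; congr 1; ring

lemma sqrt_two_pi_pos : 0 < Real.sqrt (2 * Real.pi) := by positivity

lemma normTail_eq (u : ℝ) :
    normTail u = (Real.sqrt (2 * Real.pi))⁻¹ * ∫ y in Ioi u, Real.exp (-y ^ 2 / 2) := by
  have h := intervalIntegral.integral_Iic_add_Ioi (b := u)
    integrable_exp_neg_sq_half.integrableOn integrable_exp_neg_sq_half.integrableOn
  rw [integral_exp_neg_sq_half] at h
  have h0 := sqrt_two_pi_pos
  unfold normTail Phi
  rw [← eq_sub_iff_add_eq'] at h
  rw [h]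
  field_simp

lemma normTail_nonneg (u : ℝ) : 0 ≤ normTail u := by
  rw [normTail_eq]
  have : 0 ≤ ∫ y in Ioi u, Real.exp (-y ^ 2 / 2) := by positivity
  positivity

lemma normTail_neg (u : ℝ) : normTail (-u) = 1 - normTail u := by
  rw [normTail_eq]
  have h := integral_comp_neg_Iic u (fun y : ℝ => Real.exp (-y ^ 2 / 2))
  simp only [even_two.neg_pow] at h
  rw [← h]
  unfold normTail Phi
  ring

lemma normTail_zero : normTail 0 = 1 / 2 := by
  have h := normTail_neg 0
  rw [neg_zero] at h
  linarith

lemma normTail_le_one (u : ℝ) : normTail u ≤ 1 := by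
  have := normTail_nonneg (-u)
  rw [normTail_neg] at this
  linarith

/-- An exponential tail bound; it follows from `-y²/2 ≤ 1/2 - y`. -/
lemma normTail_le_exp (u : ℝ) : normTail u ≤ 2 * Real.exp (-u) := by
  rw [normTail_eq]
  have h1 : ∫ y in Ioi u, Real.exp (-y ^ 2 / 2) ≤ Real.exp (1 / 2) * Real.exp (-u) := by
    rw [← integral_exp_neg_Ioi u, ← integral_const_mul]
    refine integral_mono integrable_exp_neg_sq_half.integrableOn
      ((integrableOn_exp_neg_Ioi u).const_mul _) fun y => ?_
    change _ ≤ Real.exp (1 / 2) * Real.exp (-y)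
    rw [← Real.exp_add]
    apply Real.exp_le_exp.mpr
    nlinarith [sq_nonneg (y - 1)]
  have h2 : Real.exp (1 / 2) ≤ 2 := by
    have h3 : Real.exp (1 / 2) ^ 2 = Real.exp 1 := by
      rw [← Real.exp_nat_mul]; norm_num
    have := Real.exp_one_lt_d9
    nlinarith [Real.exp_pos (1 / 2)]
  have h4 : (Real.sqrt (2 * Real.pi))⁻¹ ≤ 1 := by
    apply inv_le_one_of_one_le₀
    rw [Real.one_le_sqrt]
    linarith [Real.pi_gt_three]
  have h5 : 0 ≤ ∫ y in Ioi u, Real.exp (-y ^ 2 / 2) := by positivity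
  calc _ ≤ 1 * ∫ y in Ioi u, Real.exp (-y ^ 2 / 2) := by gcongr
    _ ≤ Real.exp (1 / 2) * Real.exp (-u) := by rw [one_mul]; exact h1
    _ ≤ _ := by gcongr

lemma hasDerivAt_normTail (u : ℝ) : HasDerivAt normTail (-normDens u) u := by
  have hc : Continuous (fun y : ℝ => Real.exp (-y ^ 2 / 2)) := by fun_prop
  have h : ∀ v, normTail v = normTail 0 -
      (Real.sqrt (2 * Real.pi))⁻¹ * ∫ y in (0:ℝ)..v, Real.exp (-y ^ 2 / 2) := by
    intro v
    rw [← intervalIntegral.integral_Iic_sub_Iic integrable_exp_neg_sq_half.integrableOn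
      integrable_exp_neg_sq_half.integrableOn]
    unfold normTail Phi
    ring
  rw [funext h]
  exact ((hc.integral_hasStrictDerivAt 0 u).hasDerivAt.const_mul _).const_sub _

lemma continuous_normTail : Continuous normTail :=
  continuous_iff_continuousAt.mpr fun u => (hasDerivAt_normTail u).continuousAt

lemma tendsto_normTail : Tendsto normTail atTop (𝓝 0) := by
  refine squeeze_zero normTail_nonneg normTail_le_exp ?_
  simpa using (Real.tendsto_exp_neg_atTop_nhds_zero).const_mul 2

lemma tendsto_mul_normTail : Tendsto (fun u => u * normTail u) atTop (𝓝 0) := by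
  have h := (Real.tendsto_pow_mul_exp_neg_atTop_nhds_zero 1).const_mul 2
  rw [mul_zero] at h
  refine squeeze_zero' ?_ ?_ h
  · filter_upwards [eventually_ge_atTop 0] with u hu
    exact mul_nonneg hu (normTail_nonneg u)
  · filter_upwards [eventually_ge_atTop 0] with u hu
    nlinarith [mul_le_mul_of_nonneg_left (normTail_le_exp u) hu]

lemma hasDerivAt_normDens (u : ℝ) : HasDerivAt normDens (-u * normDens u) u := by
  unfold normDens
  have h : HasDerivAt (fun u : ℝ => -u ^ 2 / 2) (-u) u := by
    have := ((hasDerivAt_pow 2 u).neg).div_const 2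
    refine this.congr_deriv ?_
    norm_num
    ring
  refine (h.exp.const_mul (Real.sqrt (2 * Real.pi))⁻¹).congr_deriv ?_
  ring

lemma tendsto_normDens : Tendsto normDens atTop (𝓝 0) := by
  unfold normDens
  have : Tendsto (fun u : ℝ => Real.exp (-u ^ 2 / 2)) atTop (𝓝 0) := by
    apply Real.tendsto_exp_atBot.comp
    have h : Tendsto (fun u : ℝ => u ^ 2 / 2) atTop atTop :=
      (tendsto_pow_atTop two_ne_zero).atTop_div_const two_pos
    refine (tendsto_neg_atTop_atBot.comp h).congr fun u => ?_
    simp only [Function.comp]; ring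
  simpa using this.const_mul (Real.sqrt (2 * Real.pi))⁻¹

/-- `exp (-|u|/a)` is integrable on the line; this is the dominating function of the bulk limit. -/
lemma integrable_exp_neg_abs_div {a : ℝ} (ha : 0 < a) :
    Integrable (fun u : ℝ => Real.exp (-(|u| / a))) := by
  have h1 : IntegrableOn (fun u : ℝ => Real.exp (-(|u| / a))) (Ioi 0) := by
    refine (exp_neg_integrableOn_Ioi 0 (inv_pos.mpr ha)).congr_fun (fun u hu => ?_)
      measurableSet_Ioi
    have hu : 0 < u := hu
    simp only [abs_of_pos hu]
    congr 1; field_simp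
  have h2 : IntegrableOn (fun u : ℝ => Real.exp (-(|u| / a))) (Iic 0) := by
    rw [integrableOn_Iic_iff_integrableOn_Iio]
    simpa using IntegrableOn.comp_neg_Iio (c := (0:ℝ))
      (f := fun u : ℝ => Real.exp (-(|u| / a))) (by simpa using h1)
  rw [← integrableOn_univ, ← Iic_union_Ioi (a := (0:ℝ))]
  exact h2.union h1

lemma integrableOn_normTail_mul {a b : ℝ} (ha : 0 < a) :
    IntegrableOn (fun u => normTail (u / a) * normTail (u / b)) (Ioi 0) := by
  refine Integrable.mono' ((integrable_exp_neg_abs_div ha).const_mul 2).integrableOn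
    ?_ ?_
  · have := continuous_normTail
    exact Continuous.aestronglyMeasurable (by fun_prop)
  · refine (ae_restrict_iff' measurableSet_Ioi).mpr (Eventually.of_forall fun u hu => ?_)
    have hu : 0 < u := hu
    rw [Real.norm_of_nonneg (mul_nonneg (normTail_nonneg _) (normTail_nonneg _)), abs_of_pos hu]
    calc _ ≤ normTail (u / a) * 1 := by
          gcongr
          · exact normTail_nonneg _
          · exact normTail_le_one _
      _ ≤ _ := by rw [mul_one]; exact normTail_le_exp _

lemma normDens_mul {a b : ℝ} (ha : 0 < a) (hb : 0 < b) (u : ℝ) :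
    normDens (u / a) * normDens (u / b) =
      (2 * Real.pi)⁻¹ * Real.exp (-((a ^ 2 + b ^ 2) / (2 * a ^ 2 * b ^ 2)) * u ^ 2) := by
  unfold normDens
  rw [mul_mul_mul_comm, ← Real.exp_add, ← mul_inv, Real.mul_self_sqrt (by positivity)]
  congr 2
  field_simp
  ring

lemma integral_normDens_mul {a b : ℝ} (ha : 0 < a) (hb : 0 < b) :
    ∫ u in Ioi (0 : ℝ), normDens (u / a) * normDens (u / b) =
      (Real.sqrt (2 * Real.pi))⁻¹ / 2 * (a * b / Real.sqrt (a ^ 2 + b ^ 2)) := by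
  simp_rw [normDens_mul ha hb]
  rw [integral_const_mul, integral_gaussian_Ioi]
  have h : Real.pi / ((a ^ 2 + b ^ 2) / (2 * a ^ 2 * b ^ 2)) =
      (2 * Real.pi) * ((a * b) ^ 2 / (a ^ 2 + b ^ 2)) := by field_simp
  rw [h, Real.sqrt_mul (by positivity), Real.sqrt_div (by positivity),
    Real.sqrt_sq (by positivity)]
  have h2 : (2 * Real.pi)⁻¹ = (Real.sqrt (2 * Real.pi))⁻¹ * (Real.sqrt (2 * Real.pi))⁻¹ := by
    rw [← mul_inv, Real.mul_self_sqrt (by positivity)]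
  rw [h2]
  have := sqrt_two_pi_pos
  field_simp

/-- The overlap of two Gaussian tails. Integration by parts gives the explicit antiderivative
`u G(u/a) G(u/b) − a φ(u/a) G(u/b) − b φ(u/b) G(u/a)` of
`G(u/a) G(u/b) + (a/b + b/a) φ(u/a) φ(u/b)`, where `G` is the tail and `φ` the density. -/
lemma integral_normTail_mul {a b : ℝ} (ha : 0 < a) (hb : 0 < b) :
    ∫ u in Ioi (0 : ℝ), normTail (u / a) * normTail (u / b) =
      (Real.sqrt (2 * Real.pi))⁻¹ / 2 * (a + b - Real.sqrt (a ^ 2 + b ^ 2)) := by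
  have hda : ∀ u : ℝ, HasDerivAt (fun u : ℝ => u / a) (1 / a) u :=
    fun u => (hasDerivAt_id u).div_const a
  have hdb : ∀ u : ℝ, HasDerivAt (fun u : ℝ => u / b) (1 / b) u :=
    fun u => (hasDerivAt_id u).div_const b
  have hφ : IntegrableOn (fun u => (a / b + b / a) * (normDens (u / a) * normDens (u / b)))
      (Ioi 0) := by
    simp_rw [normDens_mul ha hb]
    exact (((integrable_exp_neg_mul_sq (by positivity)).const_mul _).const_mul _).integrableOn
  have hG := integrableOn_normTail_mul (a := a) (b := b) ha
  have ta : Tendsto (fun u : ℝ => u / a) atTop atTop := tendsto_id.atTop_div_const ha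
  have tb : Tendsto (fun u : ℝ => u / b) atTop atTop := tendsto_id.atTop_div_const hb
  have key := integral_Ioi_of_hasDerivAt_of_tendsto'
    (f := fun u => u * normTail (u / a) * normTail (u / b)
      - a * normDens (u / a) * normTail (u / b) - b * normDens (u / b) * normTail (u / a))
    (f' := fun u => normTail (u / a) * normTail (u / b)
      + (a / b + b / a) * (normDens (u / a) * normDens (u / b)))
    (a := 0) (m := 0) ?_ (hG.add hφ) ?_
  · rw [integral_add hG hφ, integral_const_mul, integral_normDens_mul ha hb] at key
    simp only [zero_div, zero_mul, normTail_zero, zero_sub] at key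
    have h0 : normDens 0 = (Real.sqrt (2 * Real.pi))⁻¹ := by simp [normDens]
    rw [h0] at key
    have hs : Real.sqrt (a ^ 2 + b ^ 2) ^ 2 = a ^ 2 + b ^ 2 := Real.sq_sqrt (by positivity)
    have hs0 : 0 < Real.sqrt (a ^ 2 + b ^ 2) := by positivity
    have h3 : (a / b + b / a) * ((Real.sqrt (2 * Real.pi))⁻¹ / 2 *
        (a * b / Real.sqrt (a ^ 2 + b ^ 2))) =
        (Real.sqrt (2 * Real.pi))⁻¹ / 2 * Real.sqrt (a ^ 2 + b ^ 2) := by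
      have := sqrt_two_pi_pos
      field_simp
      rw [hs]
    rw [h3] at key
    linarith
  · intro u _
    have hGa := (hasDerivAt_normTail (u / a)).comp u (hda u)
    have hGb := (hasDerivAt_normTail (u / b)).comp u (hdb u)
    have hDa := (hasDerivAt_normDens (u / a)).comp u (hda u)
    have hDb := (hasDerivAt_normDens (u / b)).comp u (hdb u)
    have h := ((((hasDerivAt_id u).mul hGa).mul hGb).sub ((hDa.const_mul a).mul hGb)).sub
      ((hDb.const_mul b).mul hGa)
    refine h.congr_deriv ?_
    simp only [Pi.mul_apply, Function.comp, id]
    field_simp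
    ring
  · have h1 := ((tendsto_mul_normTail.comp ta).const_mul a).mul (tendsto_normTail.comp tb)
    have h2 := ((tendsto_normDens.comp ta).const_mul a).mul (tendsto_normTail.comp tb)
    have h3 := ((tendsto_normDens.comp tb).const_mul b).mul (tendsto_normTail.comp ta)
    have h := (h1.sub h2).sub h3
    simp only [mul_zero, sub_zero] at h
    refine h.congr fun u => ?_
    simp only [Function.comp]
    field_simp

/-! ### The noise part -/

lemma heatKer_nonneg (t z : ℝ) : 0 ≤ heatKer t z := by
  unfold heatKer; positivity

lemma heatKer_eq_gaussianPDFReal {t : ℝ} (ht : 0 ≤ t) (m y : ℝ) :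
    heatKer t (y - m) = ProbabilityTheory.gaussianPDFReal m ⟨t, ht⟩ y := by
  rfl

lemma integrable_heatKer_sub {t : ℝ} (ht : 0 ≤ t) (m : ℝ) :
    Integrable (fun y => heatKer t (y - m)) := by
  simp_rw [heatKer_eq_gaussianPDFReal ht]
  exact ProbabilityTheory.integrable_gaussianPDFReal _ _

lemma integral_heatKer_sub {t : ℝ} (ht : 0 < t) (m : ℝ) :
    ∫ y, heatKer t (y - m) = 1 := by
  simp_rw [heatKer_eq_gaussianPDFReal ht.le]
  exact ProbabilityTheory.integral_gaussianPDFReal_eq_one _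
    (fun h => ht.ne' (congrArg NNReal.toReal h))

/-- Completing the square in the product of two heat kernels. -/
lemma heatKer_mul_heatKer {p r : ℝ} (hp : 0 < p) (hr : 0 < r) (α β y : ℝ) :
    heatKer p (y - α) * heatKer r (y - β) =
      heatKer (p + r) (α - β) * heatKer (p * r / (p + r)) (y - (α * r + β * p) / (p + r)) := by
  unfold heatKer
  have h : ∀ A B C D : ℝ, 0 ≤ A → (Real.sqrt A)⁻¹ * Real.exp B * ((Real.sqrt C)⁻¹ * Real.exp D) =
      (Real.sqrt (A * C))⁻¹ * Real.exp (B + D) := by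
    intro A B C D hA
    rw [mul_mul_mul_comm, ← Real.exp_add, ← mul_inv, ← Real.sqrt_mul hA]
  rw [h _ _ _ _ (by positivity), h _ _ _ _ (by positivity)]
  congr 1
  · congr 2
    field_simp
  · congr 1
    field_simp
    ring

lemma integrable_heatKer_mul {p r : ℝ} (hp : 0 < p) (hr : 0 < r) (α β : ℝ) :
    Integrable (fun y => heatKer p (y - α) * heatKer r (y - β)) := by
  simp_rw [heatKer_mul_heatKer hp hr]
  exact (integrable_heatKer_sub (by positivity) _).const_mul _

/-- The Chapman–Kolmogorov identity on the line. -/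
lemma integral_heatKer_mul {p r : ℝ} (hp : 0 < p) (hr : 0 < r) (α β : ℝ) :
    ∫ y, heatKer p (y - α) * heatKer r (y - β) = heatKer (p + r) (α - β) := by
  simp_rw [heatKer_mul_heatKer hp hr]
  rw [integral_const_mul, integral_heatKer_sub (by positivity), mul_one]

lemma heatKer_neg (t z : ℝ) : heatKer t (-z) = heatKer t z := by
  simp [heatKer]

lemma neumannKer_abs (t y x : ℝ) : neumannKer t |y| x = neumannKer t y x := by
  rcases abs_choice y with h | h
  · rw [h]
  · rw [h]
    unfold neumannKer
    rw [← heatKer_neg t (-y - x), ← heatKer_neg t (-y + x), add_comm]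
    congr 2 <;> ring

/-- The Chapman–Kolmogorov identity on the half-line, at coinciding endpoints. The Neumann kernel
is even in `y`, so the integral is half of that over the whole line. -/
lemma integral_neumannKer_mul {p r : ℝ} (hp : 0 < p) (hr : 0 < r) (x : ℝ) :
    ∫ y in Ioi (0 : ℝ), neumannKer p y x * neumannKer r y x =
      heatKer (p + r) 0 + heatKer (p + r) (2 * x) := by
  have h := integral_comp_abs (f := fun y => neumannKer p y x * neumannKer r y x)
  simp_rw [neumannKer_abs] at h
  have e : ∀ y, neumannKer p y x * neumannKer r y x =
      (heatKer p (y - x) * heatKer r (y - x) + heatKer p (y - x) * heatKer r (y - -x)) +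
      (heatKer p (y - -x) * heatKer r (y - x) + heatKer p (y - -x) * heatKer r (y - -x)) := by
    intro y
    unfold neumannKer
    rw [sub_neg_eq_add]
    ring
  have i1 := integrable_heatKer_mul hp hr x x
  have i2 := integrable_heatKer_mul hp hr x (-x)
  have i3 := integrable_heatKer_mul hp hr (-x) x
  have i4 := integrable_heatKer_mul hp hr (-x) (-x)
  have h' : ∫ y, neumannKer p y x * neumannKer r y x =
      2 * (heatKer (p + r) 0 + heatKer (p + r) (2 * x)) := by
    have i12 : Integrable (fun y => heatKer p (y - x) * heatKer r (y - x) +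
        heatKer p (y - x) * heatKer r (y - -x)) := i1.add i2
    have i34 : Integrable (fun y => heatKer p (y - -x) * heatKer r (y - x) +
        heatKer p (y - -x) * heatKer r (y - -x)) := i3.add i4
    simp_rw [e]
    rw [integral_add i12 i34, integral_add i1 i2, integral_add i3 i4,
      integral_heatKer_mul hp hr, integral_heatKer_mul hp hr, integral_heatKer_mul hp hr,
      integral_heatKer_mul hp hr, ← heatKer_neg _ (-x - x)]
    rw [show x - x = 0 by ring, show -x - -x = 0 by ring, show x - -x = 2 * x by ring,
      show -(-x - x) = 2 * x by ring]
    ring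
  linarith

lemma heatKer_le_zero {t : ℝ} (ht : 0 ≤ t) (z : ℝ) : heatKer t z ≤ heatKer t 0 := by
  unfold heatKer
  refine mul_le_mul_of_nonneg_left (Real.exp_le_exp.mpr ?_) (by positivity)
  rw [show -(0 : ℝ) ^ 2 / (2 * t) = 0 by simp]
  exact div_nonpos_of_nonpos_of_nonneg (by nlinarith [sq_nonneg z]) (by positivity)

lemma tendsto_heatKer {t : ℝ} (ht : 0 < t) :
    Tendsto (fun x => heatKer t (2 * x)) atTop (𝓝 0) := by
  have e : ∀ x, heatKer t (2 * x) =
      (Real.sqrt t)⁻¹ * normDens (2 * x / Real.sqrt t) := by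
    intro x
    unfold heatKer normDens
    rw [Real.sqrt_mul (by positivity), mul_inv, div_pow, Real.sq_sqrt ht.le]
    rw [← mul_assoc, mul_comm (Real.sqrt t)⁻¹]
    congr 2
    field_simp
  simp_rw [e]
  have h1 : Tendsto (fun x : ℝ => 2 * x / Real.sqrt t) atTop atTop :=
    (tendsto_id.const_mul_atTop two_pos).atTop_div_const (by positivity)
  simpa using (tendsto_normDens.comp h1).const_mul (Real.sqrt t)⁻¹

/-- The antiderivative `-√(T-2s)/√(2π)` of `s ↦ q_{T-2s}(0)`; it is continuous up to the
singularity at `s = T/2`. -/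
lemma hasDerivAt_sqrt_heatKer {T s : ℝ} (hs : 0 < T - 2 * s) :
    HasDerivAt (fun s => -(Real.sqrt (2 * Real.pi))⁻¹ * Real.sqrt (T - 2 * s))
      (heatKer (T - 2 * s) 0) s := by
  have h1 : HasDerivAt (fun s : ℝ => T - 2 * s) (-2) s := by
    simpa using ((hasDerivAt_id s).const_mul 2).const_sub T
  have h := (h1.sqrt hs.ne').const_mul (-(Real.sqrt (2 * Real.pi))⁻¹)
  refine h.congr_deriv ?_
  unfold heatKer
  rw [Real.sqrt_mul (x := 2 * Real.pi) (by positivity)]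
  have := Real.sqrt_pos.mpr hs
  have := sqrt_two_pi_pos
  rw [show -(0 : ℝ) ^ 2 / (2 * (T - 2 * s)) = 0 by simp, Real.exp_zero]
  field_simp

lemma integrableOn_heatKer_time {T m : ℝ} (hmT : 2 * m ≤ T) :
    IntegrableOn (fun s => heatKer (T - 2 * s) 0) (Ioc 0 m) := by
  refine intervalIntegral.integrableOn_deriv_of_nonneg
    (g := fun s => -(Real.sqrt (2 * Real.pi))⁻¹ * Real.sqrt (T - 2 * s)) ?_ ?_ ?_
  · exact Continuous.continuousOn (by fun_prop)
  · intro s hs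
    exact hasDerivAt_sqrt_heatKer (by linarith [hs.2])
  · intro s _
    exact heatKer_nonneg _ _

lemma integral_heatKer_time {T m : ℝ} (hm : 0 ≤ m) (hmT : 2 * m ≤ T) :
    ∫ s in Ioc 0 m, heatKer (T - 2 * s) 0 =
      (Real.sqrt (2 * Real.pi))⁻¹ * (Real.sqrt T - Real.sqrt (T - 2 * m)) := by
  rw [← intervalIntegral.integral_of_le hm, intervalIntegral.integral_eq_sub_of_hasDerivAt_of_le hm
    (f := fun s => -(Real.sqrt (2 * Real.pi))⁻¹ * Real.sqrt (T - 2 * s))]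
  · simp only [mul_zero, sub_zero]; ring
  · exact Continuous.continuousOn (by fun_prop)
  · intro s hs
    exact hasDerivAt_sqrt_heatKer (by linarith [hs.2])
  · rw [intervalIntegrable_iff_integrableOn_Ioc_of_le hm]
    exact integrableOn_heatKer_time hmT

/-- The noise contribution: the reflected part `q_{t+t'-2s}(2x)` vanishes in the bulk. -/
lemma tendsto_noise {t t' : ℝ} (ht : 0 < t) (ht' : 0 < t') :
    Tendsto (fun x : ℝ => ∫ s in Ioc (0 : ℝ) (min t t'),
        ∫ y in Ioi (0 : ℝ), neumannKer (t - s) y x * neumannKer (t' - s) y x) atTop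
      (𝓝 ((Real.sqrt (2 * Real.pi))⁻¹ * (Real.sqrt (t + t') - Real.sqrt |t - t'|))) := by
  set m := min t t' with hm
  have hm0 : 0 ≤ m := le_min ht.le ht'.le
  have hmt : m ≤ t := min_le_left _ _
  have hmt' : m ≤ t' := min_le_right _ _
  have habs : |t - t'| = t + t' - 2 * m := by
    rcases le_total t t' with h | h
    · rw [hm, min_eq_left h, abs_of_nonpos (by linarith)]; ring
    · rw [hm, min_eq_right h, abs_of_nonneg (by linarith)]; ring
  have hae : ∀ᵐ s ∂(volume.restrict (Ioc 0 m)), s < m := by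
    rw [← restrict_Ioo_eq_restrict_Ioc]
    exact (ae_restrict_iff' measurableSet_Ioo).mpr (Eventually.of_forall fun s hs => hs.2)
  have hint := integrableOn_heatKer_time (T := t + t') (m := m) (by linarith)
  rw [habs, ← integral_heatKer_time hm0 (by linarith)]
  refine tendsto_integral_filter_of_dominated_convergence
    (fun s => 2 * heatKer (t + t' - 2 * s) 0) ?_ ?_ (hint.const_mul 2) ?_
  · refine Eventually.of_forall fun x => ?_
    have hmeas : Measurable (fun s : ℝ => heatKer (t + t' - 2 * s) 0 +
        heatKer (t + t' - 2 * s) (2 * x)) := by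
      unfold heatKer; fun_prop
    refine hmeas.aestronglyMeasurable.congr ?_
    filter_upwards [hae] with s hs
    rw [integral_neumannKer_mul (by linarith) (by linarith),
      show t - s + (t' - s) = t + t' - 2 * s by ring]
  · refine Eventually.of_forall fun x => ?_
    filter_upwards [hae] with s hs
    rw [integral_neumannKer_mul (by linarith) (by linarith),
      show t - s + (t' - s) = t + t' - 2 * s by ring,
      Real.norm_of_nonneg (add_nonneg (heatKer_nonneg _ _) (heatKer_nonneg _ _))]
    linarith [heatKer_le_zero (t := t + t' - 2 * s) (by linarith) (2 * x)]
  · filter_upwards [hae] with s hs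
    have h := (tendsto_heatKer (t := t + t' - 2 * s) (by linarith)).const_add
      (heatKer (t + t' - 2 * s) 0)
    rw [add_zero] at h
    refine h.congr fun x => ?_
    rw [integral_neumannKer_mul (by linarith) (by linarith),
      show t - s + (t' - s) = t + t' - 2 * s by ring]

/-! ### The initial-data part -/

/-- The difference `(1 − Φ)(v) − 𝟙_{v < 0}`; for `v < 0` it equals `−(1 − Φ)(−v)` by symmetry. -/
noncomputable def tailDiff (v : ℝ) : ℝ := if v < 0 then -normTail (-v) else normTail v

lemma measurable_tailDiff : Measurable tailDiff := by
  have := continuous_normTail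
  exact Measurable.ite measurableSet_Iio (by fun_prop) (by fun_prop)

lemma abs_tailDiff_le (v : ℝ) : |tailDiff v| ≤ 2 * Real.exp (-|v|) := by
  unfold tailDiff
  split_ifs with h
  · rw [abs_neg, abs_of_nonneg (normTail_nonneg _), abs_of_neg h]
    exact normTail_le_exp _
  · rw [abs_of_nonneg (normTail_nonneg _), abs_of_nonneg (not_lt.mp h)]
    exact normTail_le_exp _

lemma tailDiff_mul {a b : ℝ} (ha : 0 < a) (hb : 0 < b) (u : ℝ) :
    tailDiff (u / a) * tailDiff (u / b) = normTail (|u| / a) * normTail (|u| / b) := by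
  unfold tailDiff
  rcases lt_or_ge u 0 with h | h
  · rw [if_pos (div_neg_of_neg_of_pos h ha), if_pos (div_neg_of_neg_of_pos h hb), abs_of_neg h,
      neg_div, neg_div]
    ring
  · rw [if_neg (not_lt.mpr (by positivity)), if_neg (not_lt.mpr (by positivity)),
      abs_of_nonneg h]

/-- `Ψ_t(y,x) − 𝟙_{y < x}` in the centred variable `u = y − x`, with `a = √t`. -/
noncomputable def centredDiff (a x u : ℝ) : ℝ := tailDiff (u / a) + normTail ((u + 2 * x) / a)

lemma Psi_eq_of_lt {t x y : ℝ} (ht : 0 < t) (h : y < x) :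
    Psi t y x = 1 + centredDiff (Real.sqrt t) x (y - x) := by
  unfold centredDiff tailDiff
  rw [if_pos (div_neg_of_neg_of_pos (by linarith) (by positivity)), normTail_neg,
    show y - x + 2 * x = y + x by ring]
  unfold Psi normTail
  ring

lemma Psi_eq_of_ge {t x y : ℝ} (h : x ≤ y) :
    Psi t y x = centredDiff (Real.sqrt t) x (y - x) := by
  have h' : 0 ≤ y - x := by linarith
  unfold centredDiff tailDiff
  rw [if_neg (not_lt.mpr (by positivity)), show y - x + 2 * x = y + x by ring]
  unfold Psi normTail
  ring

/-- On the half-line `y > 0` the reflected tail is no larger than the direct one, because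
`u + 2x ≥ |u|`. -/
lemma abs_centredDiff_le {a x u : ℝ} (ha : 0 < a) (hx : 0 ≤ x) (hu : -x < u) :
    |centredDiff a x u| ≤ 4 * Real.exp (-(|u| / a)) := by
  unfold centredDiff
  have h1 := abs_tailDiff_le (u / a)
  rw [abs_div, abs_of_pos ha] at h1
  have h2 := normTail_le_exp ((u + 2 * x) / a)
  have h3 : Real.exp (-((u + 2 * x) / a)) ≤ Real.exp (-(|u| / a)) := by
    gcongr
    exact abs_le.mpr ⟨by linarith, by linarith⟩
  refine (abs_add_le _ _).trans ?_
  rw [abs_of_nonneg (normTail_nonneg _)]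
  linarith

/-- The product of the two centred differences, restricted to the half-line `y = x + u > 0`. -/
noncomputable def covIntegrand (a b x : ℝ) : ℝ → ℝ :=
  indicator (Ioi (-x)) fun u => centredDiff a x u * centredDiff b x u

lemma measurable_covIntegrand (a b x : ℝ) : Measurable (covIntegrand a b x) := by
  have := continuous_normTail.measurable
  have := measurable_tailDiff
  refine Measurable.indicator ?_ measurableSet_Ioi
  unfold centredDiff
  fun_prop

lemma norm_covIntegrand_le {a b x : ℝ} (ha : 0 < a) (hb : 0 < b) (hx : 0 ≤ x) (u : ℝ) :
    ‖covIntegrand a b x u‖ ≤ 16 * Real.exp (-(|u| / a)) := by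
  unfold covIntegrand
  by_cases hu : u ∈ Ioi (-x)
  · rw [indicator_of_mem hu, norm_mul, Real.norm_eq_abs, Real.norm_eq_abs]
    have h1 := abs_centredDiff_le ha hx hu
    have h2 := abs_centredDiff_le hb hx hu
    have h3 : Real.exp (-(|u| / b)) ≤ 1 := by
      rw [Real.exp_le_one_iff]
      have : 0 ≤ |u| / b := by positivity
      linarith
    nlinarith [abs_nonneg (centredDiff a x u), abs_nonneg (centredDiff b x u),
      Real.exp_pos (-(|u| / a))]
  · rw [indicator_of_notMem hu, norm_zero]
    positivity

lemma integrable_covIntegrand {a b x : ℝ} (ha : 0 < a) (hb : 0 < b) (hx : 0 ≤ x) :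
    Integrable (covIntegrand a b x) :=
  Integrable.mono' ((integrable_exp_neg_abs_div ha).const_mul 16)
    (measurable_covIntegrand a b x).aestronglyMeasurable
    (Eventually.of_forall (norm_covIntegrand_le ha hb hx))

lemma continuous_Psi (t x : ℝ) : Continuous (fun y => Psi t y x) := by
  have h : ∀ y, Psi t y x = normTail ((y - x) / Real.sqrt t) + normTail ((y + x) / Real.sqrt t) := by
    intro y; unfold Psi normTail; ring
  rw [funext h]
  have := continuous_normTail
  fun_prop

/-- The four initial-data terms combine into `∫₀^∞ (Ψ_t − 𝟙_{y<x})(Ψ_{t'} − 𝟙_{y<x}) dy`. -/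
lemma initial_eq {t t' x : ℝ} (ht : 0 < t) (ht' : 0 < t') (hx : 0 ≤ x) :
    (∫ y in Ioi (0 : ℝ), Psi t y x * Psi t' y x) - (∫ y in (0 : ℝ)..x, Psi t y x)
      - (∫ y in (0 : ℝ)..x, Psi t' y x) + x =
      ∫ u, covIntegrand (Real.sqrt t) (Real.sqrt t') x u := by
  have c1 := continuous_Psi t x
  have c2 := continuous_Psi t' x
  have hE := integrable_covIntegrand (Real.sqrt_pos.mpr ht) (Real.sqrt_pos.mpr ht') hx
  have hpt : ∀ y ∈ Ioi (0 : ℝ), Psi t y x * Psi t' y x =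
      covIntegrand (Real.sqrt t) (Real.sqrt t') x (y - x) +
        indicator (Iio x) (fun y => Psi t y x + Psi t' y x - 1) y := by
    intro y hy
    have hy : 0 < y := hy
    unfold covIntegrand
    rw [indicator_of_mem (show y - x ∈ Ioi (-x) by simp [hy])]
    rcases lt_or_ge y x with h | h
    · rw [indicator_of_mem (show y ∈ Iio x from h), Psi_eq_of_lt ht h, Psi_eq_of_lt ht' h]
      ring
    · rw [indicator_of_notMem (show y ∉ Iio x from not_lt.mpr h), Psi_eq_of_ge h, Psi_eq_of_ge h]
      ring
  have hc12 : Continuous (fun y => Psi t y x + Psi t' y x) := c1.add c2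
  have hset : Ioi (0 : ℝ) ∩ Iio x = Ioo 0 x := rfl
  have hind : IntegrableOn (indicator (Iio x) (fun y => Psi t y x + Psi t' y x - 1))
      (Ioi (0 : ℝ)) := by
    rw [IntegrableOn, integrable_indicator_iff measurableSet_Iio, IntegrableOn,
      Measure.restrict_restrict measurableSet_Iio, inter_comm, hset]
    have hc : Continuous (fun y => Psi t y x + Psi t' y x - 1) := by fun_prop
    exact hc.integrableOn_Icc.mono_set Ioo_subset_Icc_self
  rw [setIntegral_congr_fun measurableSet_Ioi hpt,
    integral_add (hE.comp_sub_right x).integrableOn hind,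
    setIntegral_indicator measurableSet_Iio, hset, ← integral_Ioc_eq_integral_Ioo,
    ← intervalIntegral.integral_of_le hx, intervalIntegral.integral_sub
      (hc12.intervalIntegrable _ _) (by simp),
    intervalIntegral.integral_add (c1.intervalIntegrable _ _) (c2.intervalIntegrable _ _),
    setIntegral_eq_integral_of_forall_compl_eq_zero,
    integral_sub_right_eq_self (covIntegrand (Real.sqrt t) (Real.sqrt t') x) x]
  · simp only [intervalIntegral.integral_const, smul_eq_mul]
    ring
  · intro y hy
    unfold covIntegrand
    exact indicator_of_notMem (by simpa using hy) _

/-- The initial-data contribution, by dominated convergence. -/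
lemma tendsto_initial {t t' : ℝ} (ht : 0 < t) (ht' : 0 < t') :
    Tendsto (fun x : ℝ => ∫ u, covIntegrand (Real.sqrt t) (Real.sqrt t') x u) atTop
      (𝓝 ((Real.sqrt (2 * Real.pi))⁻¹ *
        (Real.sqrt t + Real.sqrt t' - Real.sqrt (t + t')))) := by
  set a := Real.sqrt t with ha_def
  set b := Real.sqrt t' with hb_def
  have ha : 0 < a := Real.sqrt_pos.mpr ht
  have hb : 0 < b := Real.sqrt_pos.mpr ht'
  have hlim : (Real.sqrt (2 * Real.pi))⁻¹ * (a + b - Real.sqrt (t + t')) =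
      ∫ u : ℝ, normTail (|u| / a) * normTail (|u| / b) := by
    rw [integral_comp_abs (f := fun u => normTail (u / a) * normTail (u / b)),
      integral_normTail_mul ha hb, ha_def, hb_def, Real.sq_sqrt ht.le, Real.sq_sqrt ht'.le]
    ring
  rw [hlim]
  refine tendsto_integral_filter_of_dominated_convergence
    (fun u => 16 * Real.exp (-(|u| / a))) ?_ ?_ ((integrable_exp_neg_abs_div ha).const_mul 16) ?_
  · exact Eventually.of_forall fun x => (measurable_covIntegrand a b x).aestronglyMeasurable
  · filter_upwards [eventually_ge_atTop 0] with x hx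
    exact Eventually.of_forall (norm_covIntegrand_le ha hb hx)
  · refine Eventually.of_forall fun u => ?_
    have hG : ∀ c : ℝ, 0 < c → Tendsto (fun x => centredDiff c x u) atTop
        (𝓝 (tailDiff (u / c))) := by
      intro c hc
      have h1 : Tendsto (fun x : ℝ => (u + 2 * x) / c) atTop atTop :=
        (tendsto_atTop_add_const_left _ u
          (tendsto_id.const_mul_atTop two_pos)).atTop_div_const hc
      simpa [centredDiff] using (tendsto_normTail.comp h1).const_add (tailDiff (u / c))
    rw [← tailDiff_mul ha hb]
    refine ((hG a ha).mul (hG b hb)).congr' ?_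
    filter_upwards [eventually_gt_atTop (-u)] with x hx
    unfold covIntegrand
    rw [indicator_of_mem (show u ∈ Ioi (-x) from by simp only [mem_Ioi]; linarith)]

/-- Bulk limit of the covariance of the increment field:
as `x → ∞` the normalized covariance converges to
`(2π)^{-1/2}(√t + √t' − √|t−t'|)`. -/
theorem limCov_increment_bulk (t t' : ℝ) (ht : 0 < t) (ht' : 0 < t') :
    Filter.Tendsto
      (fun x : ℝ =>
        (∫ y in Set.Ioi (0 : ℝ), Psi t y x * Psi t' y x)
          - (∫ y in (0 : ℝ)..x, Psi t y x)
          - (∫ y in (0 : ℝ)..x, Psi t' y x)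
          + x
          + ∫ s in Set.Ioc (0 : ℝ) (min t t'),
              ∫ y in Set.Ioi (0 : ℝ), neumannKer (t - s) y x * neumannKer (t' - s) y x)
      Filter.atTop
      (nhds ((Real.sqrt (2 * Real.pi))⁻¹ *
        (Real.sqrt t + Real.sqrt t' - Real.sqrt |t - t'|))) := by
  have h := (tendsto_initial ht ht').add (tendsto_noise ht ht')
  rw [← mul_add, show Real.sqrt t + Real.sqrt t' - Real.sqrt (t + t') +
    (Real.sqrt (t + t') - Real.sqrt |t - t'|) =
    Real.sqrt t + Real.sqrt t' - Real.sqrt |t - t'| by ring] at h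
  refine h.congr' ?_
  filter_upwards [Filter.eventually_ge_atTop 0] with x hx
  rw [initial_eq ht ht' hx]
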